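/- There exists an absolute constant C > 0 such that for every 0 < r < 1 and all multi-indices α, β ∈ ℤ₊³ with β ≤ α, α₃ ≥ 1 and β₃ = 0, one has binom(α,β) · r |α|^{−1} M_{r,α} / (M_{r,β} · M_{r,α−β+(0,0,1)}) ≤ C/(|β|+1)⁴ + C/(|α|−|β|+2)⁴. -/

import Mathlib

/-- `|α| = α₁ + α₂ + α₃` for a multi-index `α ∈ ℤ₊³`. -/
def msize (α : ℕ × ℕ × ℕ) : ℕ := α.1 + α.2.1 + α.2.2

/-- Componentwise order on multi-indices: `β ≤ α`. -/
def mle (β α : ℕ × ℕ × ℕ) : Prop := β.1 ≤ α.1 ∧ β.2.1 ≤ α.2.1 ∧ β.2.2 ≤ α.2.2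

/-- The multi-index binomial coefficient `binom(α,β) = Π binom(αᵢ,βᵢ)`. -/
def mbinom (α β : ℕ × ℕ × ℕ) : ℕ :=
  α.1.choose β.1 * α.2.1.choose β.2.1 * α.2.2.choose β.2.2

/-- `M_{r,α} = r^{|α|}(|α|+1)⁴/|α|!`. -/
noncomputable def Mcoef (r : ℝ) (α : ℕ × ℕ × ℕ) : ℝ :=
  r ^ msize α * ((msize α : ℝ) + 1) ^ 4 / (Nat.factorial (msize α) : ℝ)

/-!
Since `r · r ^ |α| = r ^ |β| · r ^ (|α| - |β| + 1)`, the powers of `r` cancel. With `k = |β|` and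
`m = |α| - |β|`, the factorials leave `(m + 1) / binom(k + m, k)`, and Vandermonde's identity gives
`binom(α, β) ≤ binom(k + m, k)`. Hence the quotient is at most
`(m + 1) / (k + m) · ((k + m + 1) / ((k + 1) (m + 2))) ^ 4`, whose first factor is at most `2`; the
second is controlled by `k + m + 1 ≤ (k + 1) + (m + 2)` and convexity of the fourth power.
-/

theorem choose_mul_choose_le_add_choose_add (a b c d : ℕ) :
    a.choose c * b.choose d ≤ (a + b).choose (c + d) := by
  rw [Nat.add_choose_eq]
  exact Finset.single_le_sum (f := fun ij : ℕ × ℕ ↦ a.choose ij.1 * b.choose ij.2)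
    (fun _ _ ↦ Nat.zero_le _) (a := (c, d)) (by simp)

theorem mbinom_le_choose_msize (α β : ℕ × ℕ × ℕ) :
    mbinom α β ≤ (msize α).choose (msize β) :=
  calc mbinom α β
    _ ≤ (α.1 + α.2.1).choose (β.1 + β.2.1) * α.2.2.choose β.2.2 :=
      Nat.mul_le_mul_right _ (choose_mul_choose_le_add_choose_add ..)
    _ ≤ (msize α).choose (msize β) := choose_mul_choose_le_add_choose_add ..

theorem msize_le_msize {α β : ℕ × ℕ × ℕ} (h : mle β α) : msize β ≤ msize α :=
  Nat.add_le_add (Nat.add_le_add h.1 h.2.1) h.2.2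

theorem msize_sub_add_single {α β : ℕ × ℕ × ℕ} (h : mle β α) :
    msize (α.1 - β.1, α.2.1 - β.2.1, α.2.2 - β.2.2 + 1) = msize α - msize β + 1 := by
  obtain ⟨h₁, h₂, h₃⟩ := h
  simp only [msize]
  omega

theorem add_one_div_add_le_two {x y : ℝ} (hx : 0 ≤ x) (hxy : 1 ≤ x + y) :
    (y + 1) / (x + y) ≤ 2 := by
  rw [div_le_iff₀ (by linarith)]
  linarith

theorem add_pow_div_mul_pow_le {x y : ℝ} (hx : 0 < x) (hy : 0 < y) (p : ℕ) :
    (x + y) ^ p / (x ^ p * y ^ p) ≤ 2 ^ (p - 1) / x ^ p + 2 ^ (p - 1) / y ^ p :=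
  calc (x + y) ^ p / (x ^ p * y ^ p)
    _ ≤ 2 ^ (p - 1) * (x ^ p + y ^ p) / (x ^ p * y ^ p) := by
      gcongr
      exact add_pow_le hx.le hy.le p
    _ = 2 ^ (p - 1) / x ^ p + 2 ^ (p - 1) / y ^ p := by
      field_simp
      ring

/-- The one-variable weight `r ^ n (n + 1) ^ p / n!`. The paper's `M_{r,α}` depends on `α` only
through `|α|` and is the weight with `p = 4` and `n = |α|`. -/
noncomputable def factorialWeight (p : ℕ) (r : ℝ) (n : ℕ) : ℝ :=
  r ^ n * ((n : ℝ) + 1) ^ p / (n.factorial : ℝ)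

theorem Mcoef_eq_factorialWeight (r : ℝ) (α : ℕ × ℕ × ℕ) :
    Mcoef r α = factorialWeight 4 r (msize α) :=
  rfl

section FactorialWeight

variable {r : ℝ} (p k m : ℕ)

theorem mul_factorialWeight_add_div_eq (hr : r ≠ 0) :
    r * factorialWeight p r (k + m) / (factorialWeight p r k * factorialWeight p r (m + 1)) =
      ((m : ℝ) + 1) / ((k + m).choose k : ℝ) *
        (((k : ℝ) + m + 1) ^ p / (((k : ℝ) + 1) ^ p * ((m : ℝ) + 2) ^ p)) := by
  have hchoose : ((k + m).choose k : ℝ) * k.factorial * m.factorial = (k + m).factorial := by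
    rw [Nat.choose_symm_add]
    exact_mod_cast Nat.add_choose_mul_factorial_mul_factorial k m
  have hchoose_ne : ((k + m).choose k : ℝ) ≠ 0 :=
    Nat.cast_ne_zero.mpr (Nat.choose_pos (Nat.le_add_right k m)).ne'
  have hshift : (m : ℝ) + 1 + 1 = m + 2 := by ring
  simp only [factorialWeight, Nat.factorial_succ, ← hchoose, Nat.cast_mul, Nat.cast_add,
    Nat.cast_one, hshift, pow_add, pow_one]
  field_simp

theorem mul_factorialWeight_add_div_le (hr : r ≠ 0) (h : 1 ≤ k + m) {B : ℕ}
    (hB : B ≤ (k + m).choose k) :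
    (B : ℝ) * r * ((k : ℝ) + m)⁻¹ * factorialWeight p r (k + m) /
        (factorialWeight p r k * factorialWeight p r (m + 1)) ≤
      2 * (2 ^ (p - 1) / ((k : ℝ) + 1) ^ p + 2 ^ (p - 1) / ((m : ℝ) + 2) ^ p) := by
  have hratio : (B : ℝ) / ((k + m).choose k : ℝ) ≤ 1 :=
    div_le_one_of_le₀ (by exact_mod_cast hB) (Nat.cast_nonneg _)
  calc _ = (B : ℝ) * ((k : ℝ) + m)⁻¹ * (r * factorialWeight p r (k + m) /
        (factorialWeight p r k * factorialWeight p r (m + 1))) := by ring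
    _ = (B : ℝ) / ((k + m).choose k : ℝ) * (((m : ℝ) + 1) / ((k : ℝ) + m)) *
        (((k : ℝ) + m + 1) ^ p / (((k : ℝ) + 1) ^ p * ((m : ℝ) + 2) ^ p)) := by
      rw [mul_factorialWeight_add_div_eq p k m hr]
      ring
    _ ≤ 1 * 2 * ((((k : ℝ) + 1) + ((m : ℝ) + 2)) ^ p /
        (((k : ℝ) + 1) ^ p * ((m : ℝ) + 2) ^ p)) := by
      gcongr ?_ * ?_ * (?_ ^ p / _)
      · exact add_one_div_add_le_two (Nat.cast_nonneg k) (by exact_mod_cast h)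
      · linarith
    _ ≤ 2 * (2 ^ (p - 1) / ((k : ℝ) + 1) ^ p + 2 ^ (p - 1) / ((m : ℝ) + 2) ^ p) := by
      rw [one_mul]
      gcongr
      exact add_pow_div_mul_pow_le (by positivity) (by positivity) p

end FactorialWeight

theorem statement15_general {r : ℝ} (hr : r ≠ 0) {α β : ℕ × ℕ × ℕ} (hβα : mle β α)
    (hα : 1 ≤ msize α) :
    (mbinom α β : ℝ) * r * ((msize α : ℝ))⁻¹ * Mcoef r α /
        (Mcoef r β * Mcoef r (α.1 - β.1, α.2.1 - β.2.1, α.2.2 - β.2.2 + 1))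
      ≤ 16 / ((msize β : ℝ) + 1) ^ 4 + 16 / ((msize α : ℝ) - (msize β : ℝ) + 2) ^ 4 := by
  have hbinom := mbinom_le_choose_msize α β
  obtain ⟨m, hm⟩ := Nat.exists_eq_add_of_le (msize_le_msize hβα)
  simp only [Mcoef_eq_factorialWeight, msize_sub_add_single hβα]
  rw [hm] at hα hbinom ⊢
  rw [Nat.add_sub_cancel_left, Nat.cast_add, add_sub_cancel_left]
  refine (mul_factorialWeight_add_div_le 4 _ m hr hα hbinom).trans_eq ?_
  ring

theorem statement15 :
    ∃ C : ℝ, 0 < C ∧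
      ∀ r : ℝ, 0 < r → r < 1 →
        ∀ α β : ℕ × ℕ × ℕ, mle β α → 1 ≤ α.2.2 → β.2.2 = 0 →
          (mbinom α β : ℝ) * r * ((msize α : ℝ))⁻¹ * Mcoef r α /
              (Mcoef r β * Mcoef r (α.1 - β.1, α.2.1 - β.2.1, α.2.2 - β.2.2 + 1))
            ≤ C / ((msize β : ℝ) + 1) ^ 4
              + C / ((msize α : ℝ) - (msize β : ℝ) + 2) ^ 4 :=
  ⟨16, by norm_num, fun _ hr _ _ _ hβα hα _ ↦
    statement15_general hr.ne' hβα (hα.trans (Nat.le_add_left _ _))⟩
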